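/- For every integer n ≥ 2, the variance in the momentum domain of the Abel-Poisson wavelet has the asymptotic expansion C(ρ)/A(ρ) = (n² + 3n + 2)/(4ρ²) + (n² - 1)/(2nρ) + O(1) as ρ → 0+; that is, the function ρ ↦ C(ρ)/A(ρ) - (n² + 3n + 2)/(4ρ²) - (n² - 1)/(2nρ) is bounded on some interval (0, δ) with δ > 0. -/

import Mathlib

/-- `S n m ρ = Σ_{l=1}^∞ C(l+n-2, l) · l^m · e^{-2ρl}`. -/
noncomputable def S (n : ℕ) (m : ℤ) (ρ : ℝ) : ℝ :=
  ∑' l : ℕ, (Nat.choose (l + 1 + n - 2) (l + 1) : ℝ) * ((l : ℝ) + 1) ^ m *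
    Real.exp (-2 * ρ * ((l : ℝ) + 1))

/-- `A(ρ) = (2/(n-1)) S_{n,2}(ρ) + S_{n,1}(ρ)`. -/
noncomputable def A (n : ℕ) (ρ : ℝ) : ℝ :=
  2 / ((n : ℝ) - 1) * S n 2 ρ + S n 1 ρ

/-- `C(ρ) = (2/(n-1)) S_{n,4}(ρ) + 3 S_{n,3}(ρ) + (n-1) S_{n,2}(ρ)`. -/
noncomputable def Cf (n : ℕ) (ρ : ℝ) : ℝ :=
  2 / ((n : ℝ) - 1) * S n 4 ρ + 3 * S n 3 ρ + ((n : ℝ) - 1) * S n 2 ρ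


/-!
Put `u = 1 / (1 - exp (-2ρ))`. Since `l * C(l+k, k) = (k+1) * (C(l+k+1, k+1) - C(l+k, k))`, every
`S n m ρ` with `m ≥ 1` is a polynomial in `u`, and after cancelling common factors
`C(ρ) / A(ρ) = (n+1)(n+2) u² - ((n+1)(n²+n+1)/n) u + (n+1)/n * u / (2nu - (n-1))`.
The last term is bounded because `u ≥ 1`, and `u = 1/(2ρ) + 1/2 + O(ρ)` gives the expansion of the
other two.
-/

open Asymptotics Filter Finset Topology

section ChooseMoment

/-- The polynomial in `u = (1 - x)⁻¹` that sums `∑ l, C(l+k, k) * l ^ m * x ^ l`, defined by the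
recursion in `m` that `natCast_mul_choose_add_eq` imposes on these sums. -/
def chooseMoment {R : Type*} [CommRing R] (u : R) : ℕ → ℕ → R
  | k, 0 => u ^ (k + 1)
  | k, m + 1 => (k + 1) * (chooseMoment u (k + 1) m - chooseMoment u k m)

lemma natCast_mul_choose_add_eq {R : Type*} [CommRing R] (l k : ℕ) :
    (l : R) * (l + k).choose k = (k + 1) * ((l + (k + 1)).choose (k + 1) - (l + k).choose k) := by
  have h := congrArg (Nat.cast (R := R)) (Nat.add_one_mul_choose_eq (l + k) k)
  push_cast at h
  rw [← add_assoc]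
  linear_combination h

lemma hasSum_choose_mul_pow_mul_geometric {𝕜 : Type*} [NormedField 𝕜] {x : 𝕜} (hx : ‖x‖ < 1)
    (k m : ℕ) :
    HasSum (fun l : ℕ => ((l + k).choose k : 𝕜) * (l : 𝕜) ^ m * x ^ l)
      (chooseMoment (1 - x)⁻¹ k m) := by
  induction m generalizing k with
  | zero => simpa [chooseMoment] using hasSum_choose_mul_geometric_of_norm_lt_one k hx
  | succ m ih =>
    refine (((ih (k + 1)).sub (ih k)).mul_left ((k : 𝕜) + 1)).congr_fun fun l => ?_
    linear_combination (l : 𝕜) ^ m * x ^ l * natCast_mul_choose_add_eq (R := 𝕜) l k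

end ChooseMoment

/-- The geometric sum `∑ l, exp (-t * l)` over `l ≥ 0`, for `t > 0`; at `t = 2ρ` it is the variable
`u` in which the series `S n m ρ` are polynomials. -/
noncomputable def expGeomSum (t : ℝ) : ℝ :=
  (1 - Real.exp (-t))⁻¹

lemma one_lt_expGeomSum {t : ℝ} (ht : 0 < t) : 1 < expGeomSum t := by
  have h_exp_lt : Real.exp (-t) < 1 := Real.exp_lt_one_iff.2 (neg_lt_zero.2 ht)
  exact (one_lt_inv₀ (sub_pos.2 h_exp_lt)).2 (sub_lt_self 1 (Real.exp_pos _))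

section ClosedForms

variable {ρ : ℝ}

lemma S_eq_chooseMoment (k : ℕ) {m : ℕ} (hm : m ≠ 0) (hρ : 0 < ρ) :
    S (k + 2) m ρ = chooseMoment (expGeomSum (2 * ρ)) k m := by
  have h_norm : ‖Real.exp (-(2 * ρ))‖ < 1 := by
    rw [Real.norm_eq_abs, Real.abs_exp]
    exact Real.exp_lt_one_iff.2 (by linarith)
  have h_sum := (hasSum_nat_add_iff' 1).2 (hasSum_choose_mul_pow_mul_geometric h_norm k m)
  simp only [sum_range_one, Nat.cast_zero, zero_pow hm, mul_zero, zero_mul, sub_zero] at h_sum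
  refine (tsum_congr fun l => ?_).trans h_sum.tsum_eq
  rw [show l + 1 + (k + 2) - 2 = l + 1 + k by lia, Nat.choose_symm_add, zpow_natCast,
    ← Real.exp_nat_mul, Nat.cast_add_one, mul_comm ((l : ℝ) + 1) (-(2 * ρ)), neg_mul 2 ρ]

lemma A_eq {n : ℕ} (hn : 2 ≤ n) (hρ : 0 < ρ) :
    A n ρ = expGeomSum (2 * ρ) ^ (n - 1) * (expGeomSum (2 * ρ) - 1) *
      (2 * n * expGeomSum (2 * ρ) - (n - 1)) := by
  obtain ⟨k, rfl⟩ := Nat.exists_eq_add_of_le' hn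
  have h₁ : S (k + 2) 1 ρ = _ := mod_cast S_eq_chooseMoment k one_ne_zero hρ
  have h₂ : S (k + 2) 2 ρ = _ := mod_cast S_eq_chooseMoment k two_ne_zero hρ
  have h_ne : (k : ℝ) + 2 - 1 ≠ 0 := by linarith [k.cast_nonneg (α := ℝ)]
  rw [A, h₁, h₂, show k + 2 - 1 = k + 1 from rfl]
  simp only [chooseMoment]
  push_cast
  field_simp
  ring

lemma Cf_eq {n : ℕ} (hn : 2 ≤ n) (hρ : 0 < ρ) :
    Cf n ρ = expGeomSum (2 * ρ) ^ (n - 1) * (expGeomSum (2 * ρ) - 1) *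
      (n * (n + 1) * expGeomSum (2 * ρ) *
        (2 * (n + 2) * expGeomSum (2 * ρ) ^ 2 - 3 * (n + 1) * expGeomSum (2 * ρ) + n)) := by
  obtain ⟨k, rfl⟩ := Nat.exists_eq_add_of_le' hn
  have h₂ : S (k + 2) 2 ρ = _ := mod_cast S_eq_chooseMoment k two_ne_zero hρ
  have h₃ : S (k + 2) 3 ρ = _ := mod_cast S_eq_chooseMoment k three_ne_zero hρ
  have h₄ : S (k + 2) 4 ρ = _ := mod_cast S_eq_chooseMoment k four_ne_zero hρ
  have h_ne : (k : ℝ) + 2 - 1 ≠ 0 := by linarith [k.cast_nonneg (α := ℝ)]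
  rw [Cf, h₂, h₃, h₄, show k + 2 - 1 = k + 1 from rfl]
  simp only [chooseMoment]
  push_cast
  field_simp
  ring

lemma le_two_mul_mul_sub_sub_one {n u : ℝ} (hn : 1 ≤ n) (hu : 1 ≤ u) : u ≤ 2 * n * u - (n - 1) := by
  nlinarith

lemma Cf_div_A_eq {n : ℕ} (hn : 2 ≤ n) (hρ : 0 < ρ) :
    Cf n ρ / A n ρ = (n + 1) * (n + 2) * expGeomSum (2 * ρ) ^ 2 +
      -((n + 1) * (n ^ 2 + n + 1) / n) * expGeomSum (2 * ρ) +
      (n + 1) / n * (expGeomSum (2 * ρ) / (2 * n * expGeomSum (2 * ρ) - (n - 1))) := by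
  have hu : 1 < expGeomSum (2 * ρ) := one_lt_expGeomSum (by positivity)
  rw [Cf_eq hn hρ, A_eq hn hρ]
  set u := expGeomSum (2 * ρ)
  have hn' : (1 : ℝ) ≤ n := by exact_mod_cast one_le_two.trans hn
  have h_factor : u ^ (n - 1) * (u - 1) ≠ 0 :=
    mul_ne_zero (pow_ne_zero _ (by positivity)) (sub_ne_zero.2 hu.ne')
  have h_denom : 2 * n * u - (n - 1) ≠ 0 := by
    linarith [le_two_mul_mul_sub_sub_one hn' hu.le]
  rw [mul_div_mul_left _ _ h_factor, div_eq_iff h_denom, add_mul, mul_assoc _ (u / _),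
    div_mul_cancel₀ _ h_denom]
  field_simp
  ring

end ClosedForms

section Asymptotics

lemma one_sub_exp_neg_sub_isBigO_pow_three :
    (fun t : ℝ => 1 - Real.exp (-t) - (t - t ^ 2 / 2)) =O[𝓝 0] (· ^ 3) := by
  have h := ((Real.exp_sub_sum_range_isBigO_pow 3).comp_tendsto
    (continuous_neg.tendsto' (0 : ℝ) 0 neg_zero)).neg_left
  refine (h.congr_left fun t => ?_).trans (isBigO_of_le _ fun t => by simp)
  simp only [Function.comp_apply, sum_range_succ, sum_range_zero, Nat.factorial]
  push_cast
  ring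

lemma expGeomSum_isBigO_inv : expGeomSum =O[𝓝[≠] 0] (·⁻¹) := by
  have h_deriv : HasDerivAt (fun t : ℝ => 1 - Real.exp (-t)) 1 0 := by
    simpa using ((hasDerivAt_neg (0 : ℝ)).exp).const_sub 1
  have h_id : (fun t : ℝ => t) =O[𝓝 0] fun t => 1 - Real.exp (-t) := by
    simpa [Function.comp_def] using (h_deriv.isTheta_sub one_ne_zero).isBigO_symm
  refine (h_id.mono nhdsWithin_le_nhds).inv_rev ?_
  filter_upwards [self_mem_nhdsWithin] with t ht h_zero using absurd h_zero ht

lemma expGeomSum_sub_inv_sub_half_isBigO :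
    (fun t => expGeomSum t - t⁻¹ - 1 / 2) =O[𝓝[≠] 0] (fun t => t) := by
  have h_num : (fun t : ℝ => t - (1 - Real.exp (-t)) - t * (1 - Real.exp (-t)) / 2)
      =O[𝓝[≠] 0] (fun t => t ^ 3) := by
    have h_bdd : (fun t : ℝ => 1 + t / 2) =O[𝓝 0] fun _ => (1 : ℝ) :=
      (by fun_prop : Continuous fun t : ℝ => 1 + t / 2).continuousAt.isBigO_one ℝ
    have h_rem : (fun t : ℝ => (1 - Real.exp (-t) - (t - t ^ 2 / 2)) * (1 + t / 2))
        =O[𝓝 0] (fun t => t ^ 3) := by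
      simpa only [mul_one] using one_sub_exp_neg_sub_isBigO_pow_three.mul h_bdd
    have h_cube : (fun t : ℝ => 1 / 4 * t ^ 3) =O[𝓝 0] (fun t => t ^ 3) :=
      (isBigO_refl _ _).const_mul_left _
    refine ((h_cube.sub h_rem).congr_left fun t => ?_).mono nhdsWithin_le_nhds
    ring
  refine ((expGeomSum_isBigO_inv.mul (isBigO_refl (·⁻¹) _)).mul h_num).congr' ?_ ?_
  · filter_upwards [self_mem_nhdsWithin] with t (ht : t ≠ 0)
    have h_ne : 1 - Real.exp (-t) ≠ 0 :=
      sub_ne_zero.2 fun h => ht (neg_eq_zero.1 (Real.exp_eq_one_iff _ |>.1 h.symm))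
    rw [expGeomSum]
    field_simp
  · filter_upwards [self_mem_nhdsWithin] with t (ht : t ≠ 0)
    field_simp

lemma quadratic_expGeomSum_sub_isBigO_one (a b : ℝ) :
    (fun t => a * expGeomSum t ^ 2 + b * expGeomSum t - (a / t ^ 2 + (a + b) / t))
      =O[𝓝[≠] 0] (fun _ => (1 : ℝ)) := by
  set w : ℝ → ℝ := fun t => expGeomSum t - t⁻¹ - 1 / 2 with hw
  have hw_id : w =O[𝓝[≠] 0] (fun t => t) := expGeomSum_sub_inv_sub_half_isBigO
  have hw_one : w =O[𝓝[≠] 0] (fun _ => (1 : ℝ)) :=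
    hw_id.trans ((continuousAt_id.isBigO_one ℝ).mono nhdsWithin_le_nhds)
  have hw_div : (fun t => w t * t⁻¹) =O[𝓝[≠] 0] (fun _ => (1 : ℝ)) :=
    (hw_id.mul (isBigO_refl (·⁻¹) _)).trans
      (isBigO_of_le _ fun t => by simpa using mul_inv_le_one (a := |t|))
  have hw_sq : (fun t => w t ^ 2) =O[𝓝[≠] 0] (fun _ => (1 : ℝ)) := by
    simpa using hw_one.pow 2
  have h_const : (fun _ : ℝ => a / 4 + b / 2) =O[𝓝[≠] 0] (fun _ => (1 : ℝ)) :=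
    isBigO_const_const _ one_ne_zero _
  refine (((h_const.add (hw_one.const_mul_left (a + b))).add (hw_sq.const_mul_left a)).add
    (hw_div.const_mul_left (2 * a))).congr_left fun t => ?_
  simp only [hw]
  ring

lemma Cf_div_A_sub_isBigO_one {n : ℕ} (hn : 2 ≤ n) :
    (fun ρ => Cf n ρ / A n ρ - ((n : ℝ) ^ 2 + 3 * n + 2) / (4 * ρ ^ 2) -
      ((n : ℝ) ^ 2 - 1) / (2 * n * ρ)) =O[𝓝[>] 0] (fun _ => (1 : ℝ)) := by
  have hn' : (1 : ℝ) ≤ n := by exact_mod_cast one_le_two.trans hn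
  have h_tendsto : Tendsto (fun ρ : ℝ => 2 * ρ) (𝓝[>] 0) (𝓝[≠] 0) :=
    tendsto_nhdsWithin_iff.2 ⟨((continuous_const_mul (2 : ℝ)).tendsto' 0 0 (mul_zero _)).mono_left
      nhdsWithin_le_nhds, eventually_mem_nhdsWithin.mono fun ρ hρ => (mul_pos two_pos hρ).ne'⟩
  have h_main := (quadratic_expGeomSum_sub_isBigO_one ((n + 1) * (n + 2))
    (-((n + 1) * (n ^ 2 + n + 1) / n))).comp_tendsto h_tendsto
  have h_rem : (fun ρ => expGeomSum (2 * ρ) / (2 * n * expGeomSum (2 * ρ) - (n - 1)))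
      =O[𝓝[>] 0] (fun _ => (1 : ℝ)) := by
    refine IsBigO.of_norm_eventuallyLE ?_
    filter_upwards [self_mem_nhdsWithin] with ρ (hρ : 0 < ρ)
    have hu : 1 < expGeomSum (2 * ρ) := one_lt_expGeomSum (by positivity)
    have h_le := le_two_mul_mul_sub_sub_one hn' hu.le
    rw [Real.norm_of_nonneg (div_nonneg (by linarith) (by linarith))]
    exact div_le_one_of_le₀ h_le (by linarith)
  refine (h_main.add (h_rem.const_mul_left ((n + 1) / n))).congr' ?_ .rfl
  filter_upwards [self_mem_nhdsWithin] with ρ (hρ : 0 < ρ)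
  rw [Cf_div_A_eq hn hρ, Function.comp_apply]
  generalize expGeomSum (2 * ρ) / (2 * n * expGeomSum (2 * ρ) - (n - 1)) = r
  field_simp
  ring

end Asymptotics

/-- `C(ρ)/A(ρ) = (n²+3n+2)/(4ρ²) + (n²-1)/(2nρ) + O(1)` as `ρ → 0+`. -/
theorem stmt_13 (n : ℕ) (hn : 2 ≤ n) :
    ∃ δ > (0 : ℝ), ∃ M : ℝ, ∀ ρ : ℝ, 0 < ρ → ρ < δ →
      |Cf n ρ / A n ρ - ((n : ℝ) ^ 2 + 3 * (n : ℝ) + 2) / (4 * ρ ^ 2) -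
        ((n : ℝ) ^ 2 - 1) / (2 * (n : ℝ) * ρ)| ≤ M := by
  obtain ⟨M, hM⟩ := (Cf_div_A_sub_isBigO_one hn).bound
  obtain ⟨δ, hδ, h_bound⟩ := (nhdsGT_basis (0 : ℝ)).eventually_iff.1 hM
  refine ⟨δ, hδ, M, fun ρ hρ hρδ => ?_⟩
  simpa only [Real.norm_eq_abs, abs_one, mul_one] using h_bound ⟨hρ, hρδ⟩
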